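/- arXiv:1711.00389 — 2 statements merged into one kernel-verified Lean document; each statement's English description precedes it below -/
import Mathlib

section
/- Let T ∈ ℕ with T ≥ 1, r > 0, κ > 0, α₀, β₀ ∈ ℝ, and set λ = (3T−1)/(2πr). Assume (B1) 0 ≤ λ < 1/2, (B2) πλ < α₀/r < π(1−λ), (B3) πλ < −β₀/r < π(1−λ), and (B4) (α₀−β₀)/r < π(1 − 2(T+1)λ/(3T−1)). Then for every (t,x) ∈ Λ*_{2T}: ϑ₁(η_j/π; iκ) ≠ 0 for each j = 1,…,5, and the elementary weight q(t,x) = ∏_{j=1}^{5} [ϑ₁(ζ_j/π; iκ) / ϑ₁(η_j/π; iκ)] is a strictly positive real number. Consequently all lattice-path transition weights built from these elementary weights, and hence the excursion measure P^{0,0}_{2T}, are nonnegative, so P^{0,0}_{2T} is a probability measure. -/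
open scoped Real

/-- The Jacobi theta function `ϑ₁(v; τ)`, defined by its series
`ϑ₁(v; τ) = 2 ∑_{n=1}^∞ (−1)^{n−1} exp(πiτ(n−1/2)²) sin((2n−1)πv)`
(reindexed over `n : ℕ` starting from `0`). -/
noncomputable def theta1 (v τ : ℂ) : ℂ :=
  2 * ∑' n : ℕ, (-1 : ℂ) ^ n * Complex.exp (π * Complex.I * τ * ((n : ℂ) + 1 / 2) ^ 2) *
    Complex.sin ((2 * (n : ℂ) + 1) * π * v)

/-- The region `Λ*_{2T}` of spatio-temporal points that can carry a rightward step. -/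
def LambdaStar (T : ℕ) : Set (ℤ × ℤ) :=
  {p | Even (p.1 + p.2) ∧
    ((1 ≤ p.1 ∧ p.1 ≤ (T : ℤ) ∧ -p.1 + 2 ≤ p.2 ∧ p.2 ≤ p.1) ∨
     ((T : ℤ) + 1 ≤ p.1 ∧ p.1 ≤ 2 * (T : ℤ) ∧ p.1 - 2 * (T : ℤ) ≤ p.2 ∧
       p.2 ≤ -p.1 + 2 * (T : ℤ)))}

/-- The numerator arguments `ζ₁, …, ζ₅`. -/
noncomputable def zetaArg (T : ℕ) (r α₀ β₀ : ℝ) (t x : ℤ) : Fin 5 → ℝ :=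
  ![(2 * α₀ - (3 * (T : ℝ) + 1) + (3 * (t : ℝ) - (x : ℝ))) / (2 * r),
    (2 * β₀ - (3 * (T : ℝ) + 1) + 2 * ((t : ℝ) + (x : ℝ))) / (2 * r),
    (2 * β₀ - (3 * (T : ℝ) + 1) + 2 * ((t : ℝ) + (x : ℝ))) / (2 * r) - 1 / r,
    (2 * (α₀ - β₀) - ((t : ℝ) + (x : ℝ))) / (2 * r),
    (2 * (α₀ - β₀) - ((t : ℝ) + (x : ℝ))) / (2 * r) + 1 / r]

/-- The denominator arguments `η₁, …, η₅`. -/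
noncomputable def etaArg (T : ℕ) (r α₀ β₀ : ℝ) (t x : ℤ) : Fin 5 → ℝ :=
  ![(2 * α₀ - (3 * (T : ℝ) + 1) + ((t : ℝ) + (x : ℝ))) / (2 * r),
    (2 * β₀ - (3 * (T : ℝ) + 1) + (3 * (t : ℝ) + (x : ℝ))) / (2 * r),
    (2 * β₀ - (3 * (T : ℝ) + 1) + (3 * (t : ℝ) + (x : ℝ))) / (2 * r) - 1 / r,
    (α₀ - β₀ - (x : ℝ)) / r,
    (α₀ - β₀ - (x : ℝ)) / r + 1 / r]

lemma tsum_pos_of_geom {a : ℕ → ℝ} (h0 : 0 < a 0)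
    (hb : ∀ n, |a n| ≤ a 0 * (1 / 3 : ℝ) ^ n) : 0 < ∑' n, a n := by
  have hg : HasSum (fun n : ℕ => a 0 * (1 / 3 : ℝ) ^ (n + 1)) (a 0 * (1 / 2)) := by
    have := (hasSum_geometric_of_lt_one (r := (1 / 3 : ℝ)) (by norm_num) (by norm_num)).mul_left
      (a 0 * (1 / 3))
    rw [show a 0 * (1 / 2) = a 0 * (1 / 3) * (1 - 1 / 3 : ℝ)⁻¹ by
      rw [show (1 - 1 / 3 : ℝ)⁻¹ = 3 / 2 by norm_num]; ring]
    rw [show (fun n : ℕ => a 0 * (1 / 3 : ℝ) ^ (n + 1)) = fun n => a 0 * (1 / 3) * (1 / 3) ^ n by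
      ext n; ring]
    exact this
  have hs1 : Summable (fun n => a (n + 1)) :=
    Summable.of_norm_bounded hg.summable (fun n => by simpa using hb (n + 1))
  have hs : Summable a := (summable_nat_add_iff 1).1 hs1
  rw [hs.tsum_eq_zero_add]
  have := tsum_of_norm_bounded hg (f := fun n => a (n + 1)) (fun n => by simpa using hb (n + 1))
  rw [Real.norm_eq_abs] at this
  have := neg_le_of_abs_le this
  linarith

lemma two_mul_add_one_le_pow (n : ℕ) : (2 * (n : ℝ) + 1) ≤ 3 ^ n := by
  induction n with
  | zero => norm_num
  | succ k ih =>
    push_cast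
    rw [pow_succ]
    nlinarith [(Nat.cast_nonneg k : (0 : ℝ) ≤ k)]

lemma exp_three_ge : (9 : ℝ) ≤ Real.exp 3 := by
  have h := Real.exp_one_gt_d9
  have : Real.exp 3 = Real.exp 1 ^ 3 := by rw [← Real.exp_nat_mul]; norm_num
  rw [this]
  calc (9 : ℝ) ≤ 2.7 ^ 3 := by norm_num
    _ ≤ _ := by gcongr; linarith

lemma exp_bound (n : ℕ) {y : ℝ} (hy : 3 * (n : ℝ) ≤ y) :
    (2 * (n : ℝ) + 1) * Real.exp (-y) ≤ (1 / 3 : ℝ) ^ n := by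
  have h1 : (9 : ℝ) ^ n ≤ Real.exp y := by
    calc (9 : ℝ) ^ n ≤ Real.exp 3 ^ n := by gcongr; exact exp_three_ge
      _ = Real.exp (n * 3) := by rw [Real.exp_nat_mul]
      _ ≤ _ := Real.exp_le_exp.2 (by linarith)
  rw [Real.exp_neg, ← div_eq_mul_inv, div_le_iff₀ (Real.exp_pos _)]
  calc (2 * (n : ℝ) + 1) ≤ 3 ^ n := two_mul_add_one_le_pow n
    _ = (1 / 3 : ℝ) ^ n * 9 ^ n := by rw [← mul_pow]; norm_num
    _ ≤ _ := by gcongr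

lemma abs_sin_odd_le (n : ℕ) {x : ℝ} (hx : 0 ≤ Real.sin x) :
    |Real.sin ((2 * (n : ℝ) + 1) * x)| ≤ (2 * (n : ℝ) + 1) * Real.sin x := by
  induction n with
  | zero => simp [abs_of_nonneg hx]
  | succ k ih =>
    have e : (2 * ((k + 1 : ℕ) : ℝ) + 1) * x = (2 * (k : ℝ) + 1) * x + 2 * x := by push_cast; ring
    have h1 : |Real.sin (2 * x)| ≤ 2 * Real.sin x := by
      rw [Real.sin_two_mul, abs_mul, abs_mul, abs_of_nonneg hx]
      have := Real.abs_cos_le_one x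
      simp only [Nat.abs_ofNat]
      nlinarith
    have h2 := Real.abs_cos_le_one (2 * x)
    have h3 := Real.abs_cos_le_one ((2 * (k : ℝ) + 1) * x)
    rw [e, Real.sin_add]
    calc _ ≤ |Real.sin ((2 * (k : ℝ) + 1) * x) * Real.cos (2 * x)|
          + |Real.cos ((2 * (k : ℝ) + 1) * x) * Real.sin (2 * x)| := abs_add_le _ _
      _ ≤ (2 * (k : ℝ) + 1) * Real.sin x * 1 + 1 * (2 * Real.sin x) := by
        rw [abs_mul, abs_mul]; gcongr
      _ = _ := by push_cast; ring

lemma theta1_pos_large {κ v : ℝ} (hκ : 1 ≤ κ) (hv0 : 0 < v) (hv1 : v < 1) :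
    ∃ c : ℝ, 0 < c ∧ theta1 (v : ℂ) (Complex.I * κ) = (c : ℂ) := by
  have hs : 0 < Real.sin (π * v) :=
    Real.sin_pos_of_pos_of_lt_pi (by positivity) (by nlinarith [Real.pi_pos])
  refine ⟨2 * ∑' n : ℕ, (-1 : ℝ) ^ n * Real.exp (-(π * κ * ((n : ℝ) + 1 / 2) ^ 2)) *
    Real.sin ((2 * (n : ℝ) + 1) * (π * v)), ?_, ?_⟩
  · refine mul_pos two_pos (tsum_pos_of_geom ?_ ?_)
    · simp only [pow_zero, one_mul, Nat.cast_zero, mul_zero, zero_add]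
      positivity
    · intro n
      rw [abs_mul, abs_mul, abs_pow, abs_neg, abs_one, one_pow, one_mul, Real.abs_exp]
      have h1 := abs_sin_odd_le n hs.le
      have hn : (n : ℝ) ≤ (n : ℝ) ^ 2 := by exact_mod_cast Nat.le_self_pow two_ne_zero n
      have hpk : 3 ≤ π * κ := by nlinarith [Real.pi_gt_three]
      have h2 := exp_bound n (y := π * κ * ((n : ℝ) ^ 2 + n)) (by
        have : (0 : ℝ) ≤ n := Nat.cast_nonneg n
        nlinarith)
      calc _ ≤ Real.exp (-(π * κ * ((n : ℝ) + 1 / 2) ^ 2)) *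
            ((2 * (n : ℝ) + 1) * Real.sin (π * v)) := by gcongr
        _ = Real.exp (-(π * κ * (1 / 2) ^ 2)) * Real.sin (π * v) *
            ((2 * (n : ℝ) + 1) * Real.exp (-(π * κ * ((n : ℝ) ^ 2 + n)))) := by
          have : -(π * κ * ((n : ℝ) + 1 / 2) ^ 2) =
            -(π * κ * (1 / 2) ^ 2) + -(π * κ * ((n : ℝ) ^ 2 + n)) := by ring
          rw [this, Real.exp_add]; ring
        _ ≤ Real.exp (-(π * κ * (1 / 2) ^ 2)) * Real.sin (π * v) * (1 / 3) ^ n := by gcongr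
        _ = _ := by simp
  · unfold theta1
    push_cast
    congr 2
    ext n
    congr 2
    · congr 1
      linear_combination (π * κ * ((n : ℂ) + 1 / 2) ^ 2) * Complex.I_sq
    · ring_nf

lemma gauss_pos {c u : ℝ} (hc : 3 ≤ c) (hu0 : 0 ≤ u) (hu1 : u < 1 / 2) :
    0 < ∑' k : ℕ, (-1 : ℝ) ^ k * (Real.exp (-(c * (k + u) ^ 2))
      - Real.exp (-(c * (k + 1 - u) ^ 2))) := by
  have key : ∀ k : ℕ, Real.exp (-(c * (k + u) ^ 2)) - Real.exp (-(c * (k + 1 - u) ^ 2)) =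
      Real.exp (-(c * (k + u) ^ 2)) * (1 - Real.exp (-(c * (1 - 2 * u))) ^ (2 * k + 1)) := by
    intro k
    rw [mul_sub, mul_one, ← Real.exp_nat_mul, ← Real.exp_add]
    congr 2
    push_cast; ring
  have hcu : 0 < c * (1 - 2 * u) := mul_pos (by linarith) (by linarith)
  set y := Real.exp (-(c * (1 - 2 * u))) with hy
  have hy0 : 0 < y := Real.exp_pos _
  have hy1 : y < 1 := by rw [hy, Real.exp_lt_one_iff]; linarith
  have hyn : ∀ n : ℕ, 0 ≤ 1 - y ^ n := fun n => by
    have := pow_le_one₀ hy0.le hy1.le (n := n); linarith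
  have hb : ∀ n : ℕ, 1 - y ^ n ≤ n * (1 - y) := fun n => by
    have := one_add_mul_le_pow (a := y - 1) (by linarith) n
    rw [add_sub_cancel] at this
    linarith
  simp_rw [key]
  refine tsum_pos_of_geom ?_ ?_
  · simp only [pow_zero, one_mul, mul_zero, zero_add, pow_one]
    have := Real.exp_pos (-(c * ((0 : ℕ) + u) ^ 2))
    exact mul_pos this (by linarith)
  · intro n
    rw [abs_mul, abs_pow, abs_neg, abs_one, one_pow, one_mul, abs_mul, Real.abs_exp,
      abs_of_nonneg (hyn _)]
    have hn : (n : ℝ) ≤ (n : ℝ) ^ 2 := by exact_mod_cast Nat.le_self_pow two_ne_zero n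
    have hn0 : (0 : ℝ) ≤ n := Nat.cast_nonneg n
    have h2 := exp_bound n (y := c * ((n : ℝ) ^ 2 + 2 * n * u)) (by
      nlinarith [mul_nonneg hn0 hu0])
    have h3 := hb (2 * n + 1)
    push_cast at h3
    calc _ ≤ Real.exp (-(c * (n + u) ^ 2)) * ((2 * (n : ℝ) + 1) * (1 - y)) := by gcongr
      _ = Real.exp (-(c * u ^ 2)) * (1 - y) *
          ((2 * (n : ℝ) + 1) * Real.exp (-(c * ((n : ℝ) ^ 2 + 2 * n * u)))) := by
        have : -(c * (n + u) ^ 2) = -(c * u ^ 2) + -(c * ((n : ℝ) ^ 2 + 2 * n * u)) := by ring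
        rw [this, Real.exp_add]; ring
      _ ≤ Real.exp (-(c * u ^ 2)) * (1 - y) * (1 / 3) ^ n := by
        have : 0 ≤ 1 - y := by linarith
        gcongr
      _ = _ := by simp

lemma exp_int_pi_I (n : ℕ) : Complex.exp (n * (π * Complex.I)) = (-1) ^ n := by
  rw [Complex.exp_nat_mul, Complex.exp_pi_mul_I]

lemma theta1_eq_jacobi (v τ : ℂ) (hτ : 0 < τ.im) :
    theta1 v τ = -Complex.I * Complex.exp (π * Complex.I * τ / 4 + π * Complex.I * v) *
      jacobiTheta₂ (v - 1 / 2 + τ / 2) τ := by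
  have h := (hasSum_jacobiTheta₂_term (v - 1 / 2 + τ / 2) hτ).nat_add_neg_add_one.mul_left
    (-Complex.I * Complex.exp (π * Complex.I * τ / 4 + π * Complex.I * v))
  rw [← h.tsum_eq]
  unfold theta1
  rw [← tsum_mul_left]
  congr 1
  ext n
  have e1 : Complex.exp (π * Complex.I * τ / 4 + π * Complex.I * v) *
      jacobiTheta₂_term n (v - 1 / 2 + τ / 2) τ =
      (-1) ^ n * Complex.exp (π * Complex.I * τ * ((n : ℂ) + 1 / 2) ^ 2) *
      Complex.exp ((2 * (n : ℂ) + 1) * π * v * Complex.I) := by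
    have : ((-1 : ℂ)) ^ n = Complex.exp (-(n * (π * Complex.I))) := by
      rw [Complex.exp_neg, exp_int_pi_I, ← inv_pow]; norm_num
    rw [jacobiTheta₂_term, this, ← Complex.exp_add, ← Complex.exp_add, ← Complex.exp_add]
    congr 1; push_cast; ring
  have e2 : Complex.exp (π * Complex.I * τ / 4 + π * Complex.I * v) *
      jacobiTheta₂_term (-((n : ℤ) + 1)) (v - 1 / 2 + τ / 2) τ =
      -((-1) ^ n * Complex.exp (π * Complex.I * τ * ((n : ℂ) + 1 / 2) ^ 2) *
      Complex.exp (-((2 * (n : ℂ) + 1) * π * v) * Complex.I)) := by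
    have : -((-1 : ℂ)) ^ n = Complex.exp (((n + 1 : ℕ) : ℂ) * (π * Complex.I)) := by
      rw [exp_int_pi_I, pow_succ]; ring
    rw [← neg_mul, ← neg_mul, this, jacobiTheta₂_term, ← Complex.exp_add, ← Complex.exp_add,
      ← Complex.exp_add]
    congr 1; push_cast; ring
  rw [mul_assoc (-Complex.I), mul_add, e1, e2, Complex.sin]
  ring

lemma theta1_pos_small {κ v : ℝ} (hκ0 : 0 < κ) (hκ : κ ≤ 1) (hv0 : 0 < v) (hv1 : v ≤ 1 / 2) :
    ∃ c : ℝ, 0 < c ∧ theta1 (v : ℂ) (Complex.I * κ) = (c : ℂ) := by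
  have hc : 3 ≤ π / κ := by
    rw [le_div_iff₀ hκ0]; nlinarith [Real.pi_gt_three]
  have hpos := gauss_pos hc (u := 1 / 2 - v) (by linarith) (by linarith)
  set S := ∑' k : ℕ, (-1 : ℝ) ^ k * (Real.exp (-(π / κ * (k + (1 / 2 - v)) ^ 2))
      - Real.exp (-(π / κ * (k + 1 - (1 / 2 - v)) ^ 2))) with hS
  have hκc : (κ : ℂ) ≠ 0 := by exact_mod_cast hκ0.ne'
  have hI := Complex.I_ne_zero
  have hI2 := Complex.I_sq
  refine ⟨1 / κ ^ (1 / 2 : ℝ) * S, mul_pos (by positivity) hpos, ?_⟩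
  rw [theta1_eq_jacobi _ _ (by simpa using hκ0), jacobiTheta₂_functional_equation]
  have hsq : (-Complex.I * (Complex.I * κ)) ^ (1 / 2 : ℂ) = ((κ ^ (1 / 2 : ℝ) : ℝ) : ℂ) := by
    rw [Complex.ofReal_cpow hκ0.le]
    congr 1
    · linear_combination (-(κ : ℂ)) * hI2
    · norm_num
  have hz : ((v : ℂ) - 1 / 2 + Complex.I * κ / 2) / (Complex.I * κ) =
      1 / 2 + Complex.I * ((1 / 2 - v) / κ) := by
    field_simp
    linear_combination (2 * (v : ℂ) - 1) * hI2
  have ht : -1 / (Complex.I * κ) = Complex.I / κ := by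
    field_simp
    linear_combination -hI2
  have hpre : -Complex.I * Complex.exp (π * Complex.I * (Complex.I * κ) / 4 + π * Complex.I * v) *
      Complex.exp (-π * Complex.I * ((v : ℂ) - 1 / 2 + Complex.I * κ / 2) ^ 2 / (Complex.I * κ)) =
      Complex.exp (-(π / κ * (1 / 2 - v) ^ 2)) := by
    have : -Complex.I = Complex.exp (-(π / 2 * Complex.I)) := by
      rw [Complex.exp_neg, Complex.exp_pi_div_two_mul_I, Complex.inv_I]
    rw [this, ← Complex.exp_add, ← Complex.exp_add]
    congr 1
    field_simp
    ring_nf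
  have him : 0 < (Complex.I / (κ : ℂ)).im := by
    rw [Complex.div_ofReal_im, Complex.I_im]
    positivity
  have hJ : Complex.exp (-(π / κ * (1 / 2 - v) ^ 2)) *
      jacobiTheta₂ (1 / 2 + Complex.I * ((1 / 2 - v) / κ)) (Complex.I / κ) = (S : ℂ) := by
    have h := (hasSum_jacobiTheta₂_term (1 / 2 + Complex.I * ((1 / 2 - v) / κ))
      him).nat_add_neg_add_one.mul_left (Complex.exp (-(π / κ * (1 / 2 - v) ^ 2)))
    rw [← h.tsum_eq, hS, Complex.ofReal_tsum]
    congr 1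
    ext n
    have e1 : Complex.exp (-(π / κ * (1 / 2 - v) ^ 2)) *
        jacobiTheta₂_term n (1 / 2 + Complex.I * ((1 / 2 - v) / κ)) (Complex.I / κ) =
        (-1) ^ n * Complex.exp (-(π / κ * (n + (1 / 2 - v)) ^ 2)) := by
      rw [← exp_int_pi_I, jacobiTheta₂_term, ← Complex.exp_add, ← Complex.exp_add]
      congr 1
      push_cast
      linear_combination ((π : ℂ) / κ * n ^ 2 + 2 * π * n * (1 / 2 - v) / κ) * hI2
    have e2 : Complex.exp (-(π / κ * (1 / 2 - v) ^ 2)) *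
        jacobiTheta₂_term (-((n : ℤ) + 1)) (1 / 2 + Complex.I * ((1 / 2 - v) / κ))
          (Complex.I / κ) =
        -((-1) ^ n * Complex.exp (-(π / κ * (n + 1 - (1 / 2 - v)) ^ 2))) := by
      have : -((-1 : ℂ)) ^ n = Complex.exp (-(((n + 1 : ℕ) : ℂ) * (π * Complex.I))) := by
        rw [Complex.exp_neg, exp_int_pi_I, ← inv_pow, pow_succ]; norm_num
      rw [← neg_mul ((-1 : ℂ) ^ n), this, jacobiTheta₂_term, ← Complex.exp_add, ← Complex.exp_add]
      congr 1
      push_cast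
      linear_combination ((π : ℂ) / κ * (n + 1) ^ 2 - 2 * π * (n + 1) * (1 / 2 - v) / κ) * hI2
    rw [mul_add, e1, e2]
    push_cast
    ring
  rw [hz, ht, hsq, Complex.ofReal_mul, ← hJ, ← hpre]
  push_cast
  ring

lemma theta1_one_sub (v τ : ℂ) : theta1 (1 - v) τ = theta1 v τ := by
  unfold theta1
  congr 2
  ext n
  congr 1
  have : (2 * (n : ℂ) + 1) * π * (1 - v) =
    (π - (2 * (n : ℂ) + 1) * π * v) + n * (2 * π) := by ring
  rw [this, Complex.sin_add_nat_mul_two_pi, Complex.sin_pi_sub]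

lemma theta1_neg (v τ : ℂ) : theta1 (-v) τ = -theta1 v τ := by
  unfold theta1
  rw [← mul_neg, ← tsum_neg]
  congr 2
  ext n
  rw [mul_neg, Complex.sin_neg, mul_neg]

lemma theta1_pos {κ v : ℝ} (hκ : 0 < κ) (hv0 : 0 < v) (hv1 : v < 1) :
    ∃ c : ℝ, 0 < c ∧ theta1 (v : ℂ) (Complex.I * κ) = (c : ℂ) := by
  rcases le_total 1 κ with h | h
  · exact theta1_pos_large h hv0 hv1
  · rcases le_total v (1 / 2) with h' | h'
    · exact theta1_pos_small hκ h hv0 h'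
    · obtain ⟨c, hc, e⟩ := theta1_pos_small (v := 1 - v) hκ h (by linarith) (by linarith)
      refine ⟨c, hc, ?_⟩
      rw [← e, ← theta1_one_sub]
      push_cast
      rfl

/-- positivity of theta1 at `y / (r π)` for `0 < y < π r`. -/
lemma theta1_pos_arg {κ z r y : ℝ} (hκ : 0 < κ) (hr : 0 < r) (hz : z = y / r) (h0 : 0 < y)
    (h1 : y < π * r) : ∃ c : ℝ, 0 < c ∧ theta1 ((z / π : ℝ) : ℂ) (Complex.I * κ) = (c : ℂ) := by
  have hp := Real.pi_pos
  subst hz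
  refine theta1_pos hκ (by positivity) ?_
  rw [div_lt_one hp, div_lt_iff₀ hr]
  exact h1

lemma theta1_neg_arg {κ z r y : ℝ} (hκ : 0 < κ) (hr : 0 < r) (hz : z = y / r) (h0 : y < 0)
    (h1 : -(π * r) < y) :
    ∃ c : ℝ, c < 0 ∧ theta1 ((z / π : ℝ) : ℂ) (Complex.I * κ) = (c : ℂ) := by
  obtain ⟨c, hc, e⟩ := theta1_pos_arg (z := -z) (y := -y) hκ hr (by rw [hz]; ring)
    (by linarith) (by linarith)
  refine ⟨-c, by linarith, ?_⟩
  rw [neg_div, Complex.ofReal_neg, theta1_neg] at e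
  rw [Complex.ofReal_neg, ← e, neg_neg]

lemma lambdaStar_bounds {T : ℕ} {t x : ℤ} (h : (t, x) ∈ LambdaStar T) :
    2 ≤ t + x ∧ t + x ≤ 2 * T ∧ 2 ≤ 3 * t - x ∧ 3 * t - x ≤ 6 * T ∧ 4 ≤ 3 * t + x ∧
      3 * t + x ≤ 6 * T ∧ x ≤ T ∧ 1 - T ≤ x := by
  obtain ⟨-, h⟩ := h
  simp only at h
  omega

/-- Theorem 5.1: sufficient positivity conditions for the elliptic elementary weight,
hence for the elliptic excursion measure. -/
theorem elliptic_weight_positive (T : ℕ) (hT : 1 ≤ T) (r κ α₀ β₀ : ℝ)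
    (hr : 0 < r) (hκ : 0 < κ) (lam : ℝ) (hlam : lam = (3 * (T : ℝ) - 1) / (2 * π * r))
    (hB1 : 0 ≤ lam ∧ lam < 1 / 2)
    (hB2 : π * lam < α₀ / r ∧ α₀ / r < π * (1 - lam))
    (hB3 : π * lam < -β₀ / r ∧ -β₀ / r < π * (1 - lam))
    (hB4 : (α₀ - β₀) / r < π * (1 - 2 * ((T : ℝ) + 1) / (3 * (T : ℝ) - 1) * lam)) :
    ∀ t x : ℤ, (t, x) ∈ LambdaStar T →
      (∀ j : Fin 5,
        theta1 ((etaArg T r α₀ β₀ t x j / π : ℝ) : ℂ) (Complex.I * κ) ≠ 0) ∧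
      (∃ c : ℝ, 0 < c ∧
        (∏ j : Fin 5,
          theta1 ((zetaArg T r α₀ β₀ t x j / π : ℝ) : ℂ) (Complex.I * κ) /
            theta1 ((etaArg T r α₀ β₀ t x j / π : ℝ) : ℂ) (Complex.I * κ)) = (c : ℂ)) := by
  intro t x hmem
  obtain ⟨b1, b2, b3, b4, b5, b6, b7, b8⟩ := lambdaStar_bounds hmem
  have c1 : (2 : ℝ) ≤ t + x := by exact_mod_cast b1
  have c2 : (t : ℝ) + x ≤ 2 * T := by exact_mod_cast b2
  have c3 : (2 : ℝ) ≤ 3 * t - x := by exact_mod_cast b3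
  have c4 : 3 * (t : ℝ) - x ≤ 6 * T := by exact_mod_cast b4
  have c5 : (4 : ℝ) ≤ 3 * t + x := by exact_mod_cast b5
  have c6 : 3 * (t : ℝ) + x ≤ 6 * T := by exact_mod_cast b6
  have c7 : (x : ℝ) ≤ T := by exact_mod_cast b7
  have c8 : 1 - (T : ℝ) ≤ x := by exact_mod_cast b8
  have hT' : (1 : ℝ) ≤ T := by exact_mod_cast hT
  have hp := Real.pi_pos
  have hl : π * lam * r = (3 * (T : ℝ) - 1) / 2 := by rw [hlam]; field_simp
  have hl2 : π * (2 * ((T : ℝ) + 1) / (3 * (T : ℝ) - 1) * lam) * r = T + 1 := by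
    have : (3 * (T : ℝ) - 1) ≠ 0 := by linarith
    rw [hlam]
    generalize 3 * (T : ℝ) - 1 = d at this ⊢
    field_simp
  obtain ⟨a1, a2⟩ := hB2
  obtain ⟨a3, a4⟩ := hB3
  rw [lt_div_iff₀ hr] at a1 a3
  rw [div_lt_iff₀ hr] at a2 a4 hB4
  have a2' : α₀ < π * r - (3 * (T : ℝ) - 1) / 2 := by rw [← hl]; linarith
  have a4' : -β₀ < π * r - (3 * (T : ℝ) - 1) / 2 := by rw [← hl]; linarith
  have a5' : α₀ - β₀ < π * r - (T + 1) := by rw [← hl2]; linarith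
  rw [hl] at a1 a3
  have hr' := hr.ne'
  have hz : ∀ j : Fin 5, theta1 ((etaArg T r α₀ β₀ t x j / π : ℝ) : ℂ) (Complex.I * κ) ≠ 0 ∧
      ∃ c : ℝ, 0 < c ∧ theta1 ((zetaArg T r α₀ β₀ t x j / π : ℝ) : ℂ) (Complex.I * κ) /
        theta1 ((etaArg T r α₀ β₀ t x j / π : ℝ) : ℂ) (Complex.I * κ) = (c : ℂ) := by
    have pp : ∀ a b : ℂ, (∃ c : ℝ, 0 < c ∧ a = c) → (∃ c : ℝ, 0 < c ∧ b = c) →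
        (b ≠ 0 ∧ ∃ c : ℝ, 0 < c ∧ a / b = c) := by
      rintro _ _ ⟨c, hc, rfl⟩ ⟨d, hd, rfl⟩
      exact ⟨by exact_mod_cast hd.ne', c / d, div_pos hc hd, by push_cast; rfl⟩
    have nn : ∀ a b : ℂ, (∃ c : ℝ, c < 0 ∧ a = c) → (∃ c : ℝ, c < 0 ∧ b = c) →
        (b ≠ 0 ∧ ∃ c : ℝ, 0 < c ∧ a / b = c) := by
      rintro _ _ ⟨c, hc, rfl⟩ ⟨d, hd, rfl⟩
      exact ⟨by exact_mod_cast hd.ne, c / d, div_pos_of_neg_of_neg hc hd, by push_cast; rfl⟩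
    intro j
    fin_cases j
    · refine pp _ _
        (theta1_pos_arg (y := α₀ + (-(3 * (T : ℝ) + 1) + (3 * t - x)) / 2) hκ hr ?_ ?_ ?_)
        (theta1_pos_arg (y := α₀ + (-(3 * (T : ℝ) + 1) + (t + x)) / 2) hκ hr ?_ ?_ ?_)
      · simp [zetaArg]; field_simp; ring
      · linarith
      · linarith
      · simp [etaArg]; field_simp; ring
      · linarith
      · linarith
    · refine nn _ _
        (theta1_neg_arg (y := β₀ + (-(3 * (T : ℝ) + 1) + 2 * (t + x)) / 2) hκ hr ?_ ?_ ?_)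
        (theta1_neg_arg (y := β₀ + (-(3 * (T : ℝ) + 1) + (3 * t + x)) / 2) hκ hr ?_ ?_ ?_)
      · simp [zetaArg]; field_simp; ring
      · linarith
      · linarith
      · simp [etaArg]; field_simp; ring
      · linarith
      · linarith
    · refine nn _ _
        (theta1_neg_arg (y := β₀ + (-(3 * (T : ℝ) + 1) + 2 * (t + x)) / 2 - 1) hκ hr ?_ ?_ ?_)
        (theta1_neg_arg (y := β₀ + (-(3 * (T : ℝ) + 1) + (3 * t + x)) / 2 - 1) hκ hr ?_ ?_ ?_)
      · simp [zetaArg]; field_simp; ring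
      · linarith
      · linarith
      · simp [etaArg]; field_simp; ring
      · linarith
      · linarith
    · refine pp _ _
        (theta1_pos_arg (y := α₀ - β₀ - (t + x) / 2) hκ hr ?_ ?_ ?_)
        (theta1_pos_arg (y := α₀ - β₀ - x) hκ hr ?_ ?_ ?_)
      · simp [zetaArg]; field_simp
      · linarith
      · linarith
      · simp [etaArg]
      · linarith
      · linarith
    · refine pp _ _
        (theta1_pos_arg (y := α₀ - β₀ - (t + x) / 2 + 1) hκ hr ?_ ?_ ?_)
        (theta1_pos_arg (y := α₀ - β₀ - x + 1) hκ hr ?_ ?_ ?_)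
      · simp [zetaArg]; field_simp
      · linarith
      · linarith
      · simp [etaArg]; field_simp
      · linarith
      · linarith
  refine ⟨fun j => (hz j).1, ?_⟩
  choose c hc he using fun j => (hz j).2
  refine ⟨∏ j, c j, Finset.prod_pos fun j _ => hc j, ?_⟩
  rw [Complex.ofReal_prod]
  exact Finset.prod_congr rfl fun j _ => he j
end

section
/- Let ξ ∈ ℝ and let (T_j) be a sequence of positive integers tending to infinity and (x_j) integers with T_j + x_j even and x_j/√(T_j) → ξ as j → ∞. Then (√(T_j)/2) · P̃_{2T_j}(T_j, x_j) converges to f(ξ) = (3^{1/4}/2) · exp(−(√3 π/4) ξ²) as j → ∞. That is, at time t = T the fluctuation of the simplified trigonometric excursion process is of order √T with normally distributed coefficient of variance σ² = 2/(√3 π). -/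
open scoped Real
open Filter

/-- The spatio-temporal region `Λ_{2T}` of the excursion process. -/
def LambdaSet (T : ℕ) : Set (ℤ × ℤ) :=
  {p | Even (p.1 + p.2) ∧
    ((0 ≤ p.1 ∧ p.1 ≤ (T : ℤ) ∧ -p.1 ≤ p.2 ∧ p.2 ≤ p.1) ∨
     ((T : ℤ) + 1 ≤ p.1 ∧ p.1 ≤ 2 * (T : ℤ) ∧ p.1 - 2 * (T : ℤ) ≤ p.2 ∧
       p.2 ≤ 2 * (T : ℤ) - p.1))}

/-- The normalization constant `c̃₂(t;T)`. -/
noncomputable def ctilde2 (T : ℕ) (t : ℤ) : ℝ :=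
  ((∏ n ∈ Finset.Icc (1 : ℤ) t, Real.sin ((n : ℝ) * π / (3 * T))) *
      (∏ n ∈ Finset.Icc (1 : ℤ) (2 * (T : ℤ) - t), Real.sin ((n : ℝ) * π / (3 * T))) /
      ∏ n ∈ Finset.Icc (1 : ℤ) (2 * (T : ℤ)), Real.sin ((n : ℝ) * π / (3 * T))) *
    ∏ n ∈ Finset.Icc (1 : ℤ) (T : ℤ),
      Real.sin ((n : ℝ) * π / (3 * T)) ^ 2 / Real.cos ((2 * (n : ℝ) - (T : ℝ) - 1) * π / (6 * T))

open Classical in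
/-- The single-time distribution `P̃_{2T}(t,x)` of the simplified trigonometric
excursion process at the special parameters `πr = 3T`, `α₀/r = π/2`. -/
noncomputable def Ptilde (T : ℕ) (t x : ℤ) : ℝ :=
  if (t, x) ∈ LambdaSet T then
    ctilde2 T t *
      (∏ n ∈ Finset.Icc (1 : ℤ) ((t + x) / 2),
        Real.cos ((2 * (n : ℝ) + 3 * (T : ℝ) - 2 * (t : ℝ) - 1) * π / (6 * T)) /
          Real.sin ((n : ℝ) * π / (3 * T))) *
      (∏ n ∈ Finset.Icc (1 : ℤ) ((t - x) / 2), 1 / Real.sin ((n : ℝ) * π / (3 * T))) *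
      (∏ n ∈ Finset.Icc (1 : ℤ) ((2 * (T : ℤ) - t - x) / 2),
        Real.cos ((2 * (n : ℝ) + 2 * (t : ℝ) - (T : ℝ) - 1) * π / (6 * T)) /
          Real.sin ((n : ℝ) * π / (3 * T))) *
      (∏ n ∈ Finset.Icc (1 : ℤ) ((2 * (T : ℤ) - t + x) / 2),
        1 / Real.sin ((n : ℝ) * π / (3 * T)))
  else 0


noncomputable def lsin (y : ℝ) : ℝ := Real.log (Real.sin y)
noncomputable def FF (y : ℝ) : ℝ := ∫ u in (π/2)..y, lsin u

lemma lsin_ii (a b : ℝ) : IntervalIntegrable lsin MeasureTheory.volume a b :=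
  intervalIntegrable_log_sin

lemma FF_sub (a b : ℝ) : ∫ u in a..b, lsin u = FF b - FF a := by
  unfold FF
  rw [intervalIntegral.integral_interval_sub_left (lsin_ii _ _) (lsin_ii _ _)]

lemma lsin_hasDerivAt {y : ℝ} (h0 : 0 < y) (h1 : y < π) :
    HasDerivAt lsin (Real.cos y / Real.sin y) y := by
  have := Real.sin_pos_of_pos_of_lt_pi h0 h1
  exact (Real.hasDerivAt_sin y).log this.ne'

lemma FF_hasDerivAt {y : ℝ} (h0 : 0 < y) (h1 : y < π) : HasDerivAt FF (lsin y) y := by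
  have hc : ∀ᶠ z in nhds y, ContinuousAt lsin z := by
    filter_upwards [Ioo_mem_nhds h0 h1] with z hz
    exact (lsin_hasDerivAt hz.1 hz.2).continuousAt
  refine intervalIntegral.integral_hasDerivAt_right (lsin_ii _ _) ?_ hc.self_of_nhds
  have : ContinuousOn lsin (Set.Ioo 0 π) := fun z hz =>
    (lsin_hasDerivAt hz.1 hz.2).continuousAt.continuousWithinAt
  exact this.stronglyMeasurableAtFilter isOpen_Ioo y ⟨h0, h1⟩

lemma FF_refl : FF (2*π/3) - FF (π/3) = 2 * (FF (π/2) - FF (π/3)) := by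
  have h1 : ∫ u in (π/2)..(2*π/3), lsin u = ∫ u in (π/3)..(π/2), lsin u := by
    have := intervalIntegral.integral_comp_sub_left (a := π/3) (b := π/2) lsin π
    rw [show π - π/2 = π/2 by ring, show π - π/3 = 2*π/3 by ring] at this
    rw [← this]
    simp [lsin, Real.sin_pi_sub]
  rw [FF_sub, FF_sub] at h1
  linarith

lemma FF_dup : FF (π/2) - 3 * FF (π/3) + 2 * FF (π/6) = π/6 * Real.log 2 := by
  have hpi := Real.pi_pos
  have h1 : ∫ u in (π/6)..(π/3), lsin (2*u) = FF (π/2) - FF (π/3) := by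
    rw [intervalIntegral.integral_comp_mul_left lsin (two_ne_zero), show 2*(π/6) = π/3 by ring,
      show 2*(π/3) = 2*π/3 by ring, FF_sub, FF_refl]
    simp
  have h2 : ∫ u in (π/6)..(π/3), lsin (π/2 - u) = FF (π/3) - FF (π/6) := by
    rw [intervalIntegral.integral_comp_sub_left lsin, show π/2-π/3 = π/6 by ring,
      show π/2-π/6 = π/3 by ring, FF_sub]
  have h3 : ∫ u in (π/6)..(π/3), lsin (2*u) =
      ∫ u in (π/6)..(π/3), (Real.log 2 + lsin u + lsin (π/2 - u)) := by
    apply intervalIntegral.integral_congr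
    intro u hu
    rw [Set.uIcc_of_le (by linarith)] at hu
    obtain ⟨ha, hb⟩ := hu
    have hs := Real.sin_pos_of_pos_of_lt_pi (show 0 < u by linarith) (by linarith)
    have hcc := Real.cos_pos_of_mem_Ioo (show u ∈ Set.Ioo (-(π/2)) (π/2) from ⟨by linarith, by linarith⟩)
    simp only [lsin]
    rw [Real.sin_two_mul, Real.sin_pi_div_two_sub, Real.log_mul (by positivity) (by positivity),
      Real.log_mul (by positivity) (by positivity)]
  have hi2 : IntervalIntegrable (fun u => lsin (π/2 - u)) MeasureTheory.volume (π/6) (π/3) := by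
    have := (lsin_ii (π/2 - π/6) (π/2-π/3)).comp_sub_left (π/2)
    simpa using this
  rw [intervalIntegral.integral_add (by
      exact (intervalIntegrable_const).add (lsin_ii _ _)) hi2,
      intervalIntegral.integral_add intervalIntegrable_const (lsin_ii _ _), h2, FF_sub, h1] at h3
  simp at h3
  linarith

lemma trap_err {c p q : ℝ} (hc : 0 < c) (hp : c ≤ p) (hpq : p < q) (hq : q ≤ π - c)
    (hc2 : c ≤ π / 2) {N : ℕ} (hN : 0 < N) :
    |trapezoidal_error lsin N p q| ≤ |q - p| ^ 3 * (1 / Real.sin c ^ 2) / (12 * N ^ 2) := by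
  have hpi := Real.pi_pos
  have hsc := Real.sin_pos_of_pos_of_lt_pi hc (by linarith)
  have hU : Set.uIcc p q = Set.Icc p q := Set.uIcc_of_le hpq.le
  have hud := uniqueDiffOn_Icc hpq
  have hd1 : ∀ y ∈ Set.Icc p q, derivWithin lsin (Set.Icc p q) y = Real.cos y / Real.sin y :=
    fun y hy => (lsin_hasDerivAt (by linarith [hy.1]) (by linarith [hy.2])).hasDerivWithinAt.derivWithin (hud y hy)
  have hd2 : ∀ y ∈ Set.Icc p q, HasDerivWithinAt (derivWithin lsin (Set.Icc p q)) (-1 / Real.sin y ^ 2)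
      (Set.Icc p q) y := by
    intro y hy
    have hs := Real.sin_pos_of_pos_of_lt_pi (show 0 < y by linarith [hy.1]) (by linarith [hy.2])
    have h1 : HasDerivAt (fun y => Real.cos y / Real.sin y) (-1 / Real.sin y ^ 2) y := by
      rw [show (-1:ℝ) = -Real.sin y * Real.sin y - Real.cos y * Real.cos y by
        nlinarith [Real.sin_sq_add_cos_sq y]]
      exact (Real.hasDerivAt_cos y).div (Real.hasDerivAt_sin y) hs.ne'
    exact h1.hasDerivWithinAt.congr hd1 (hd1 y hy)
  apply trapezoidal_error_le _ _ _ hN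
  · rw [hU]; intro y hy
    exact (lsin_hasDerivAt (by linarith [hy.1]) (by linarith [hy.2])).differentiableAt.differentiableWithinAt
  · rw [hU]; intro y hy
    exact (hd2 y hy).differentiableWithinAt
  · rw [hU]; intro y
    rw [iteratedDerivWithin_succ, show (1:ℕ) = 0 + 1 from rfl]
    have e : iteratedDerivWithin (0+1) lsin (Set.Icc p q) = derivWithin lsin (Set.Icc p q) := by
      ext z; simp
    rw [e]
    by_cases hy : y ∈ Set.Icc p q
    · rw [(hd2 y hy).derivWithin (hud y hy)]
      have hs := Real.sin_pos_of_pos_of_lt_pi (show 0 < y by linarith [hy.1]) (by linarith [hy.2])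
      have : Real.sin c ≤ Real.sin y := by
        by_cases h : y ≤ π/2
        · exact Real.sin_le_sin_of_le_of_le_pi_div_two (by linarith) h (by linarith [hy.1])
        · rw [← Real.sin_pi_sub y]
          exact Real.sin_le_sin_of_le_of_le_pi_div_two (by linarith) (by linarith) (by linarith [hy.2])
      rw [abs_div, abs_neg, abs_one, abs_of_pos (by positivity)]
      gcongr
    · rw [derivWithin_zero_of_notMem_closure (by rwa [isClosed_Icc.closure_eq])]
      simp; positivity

/-- trapezoidal sum -/
lemma trap_sum {c p h : ℝ} (hc : 0 < c) (hp : c ≤ p) (hh : 0 < h) {N : ℕ} (hq : p + N * h ≤ π - c)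
    (hc2 : c ≤ π / 2) :
    |(∑ k ∈ Finset.range N, lsin (p + (k+1) * h)) - ((FF (p + N*h) - FF p) / h
      + (lsin (p + N * h) - lsin p) / 2)| ≤ π / Real.sin c ^ 2 * h := by
  have hpi := Real.pi_pos
  have hsc := Real.sin_pos_of_pos_of_lt_pi hc (by linarith)
  rcases Nat.eq_zero_or_pos N with rfl | hN
  · simp; positivity
  have hN' : (0:ℝ) < N := by exact_mod_cast hN
  have hNh : 0 < N * h := by positivity
  have key := trap_err hc hp (show p < p + N*h by linarith) hq hc2 hN
  rw [trapezoidal_error, trapezoidal_integral, FF_sub] at key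
  obtain ⟨M, rfl⟩ : ∃ M, N = M + 1 := ⟨N-1, by omega⟩
  simp only [add_sub_cancel_left, Nat.add_sub_cancel] at key
  have e1 : ∀ k : ℕ, p + (k+1) * (((M+1 : ℕ):ℝ) * h) / ((M+1:ℕ):ℝ) = p + (k+1) * h := by
    intro k; field_simp
  simp only [e1] at key
  rw [mul_div_cancel_left₀ _ hN'.ne', abs_of_pos hNh] at key
  rw [Finset.sum_range_succ]
  have e2 : p + ((M:ℝ)+1) * h = p + ((M+1:ℕ):ℝ) * h := by push_cast; ring
  rw [e2]
  set q := p + ((M+1:ℕ):ℝ) * h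
  set s := ∑ k ∈ Finset.range M, lsin (p + (k+1) * h)
  set n : ℝ := ((M+1:ℕ):ℝ)
  have e3 : s + lsin q - ((FF q - FF p) / h + (lsin q - lsin p) / 2) =
     (h * ((lsin p + lsin q) / 2 + s) - (FF q - FF p)) / h := by field_simp; ring
  rw [e3, abs_div, abs_of_pos hh, div_le_iff₀ hh]
  refine key.trans ?_
  have e4 : (n * h)^3 * (1 / Real.sin c ^ 2) / (12 * n^2) = (n*h) / 12 / Real.sin c ^ 2 * h * h := by
    field_simp
  rw [e4]
  gcongr
  linarith

/-- midpoint sum -/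
lemma mid_sum {c p h : ℝ} (hc : 0 < c) (hp : c ≤ p) (hh : 0 < h) {N : ℕ} (hq : p + N * h ≤ π - c)
    (hc2 : c ≤ π / 2) :
    |(∑ k ∈ Finset.range N, lsin (p + (k+1/2) * h)) - (FF (p + N*h) - FF p) / h|
      ≤ 2 * (π / Real.sin c ^ 2) * h := by
  have hpi := Real.pi_pos
  have hsc := Real.sin_pos_of_pos_of_lt_pi hc (by linarith)
  have t1 := trap_sum hc hp hh hq hc2
  have e0 : p + ((2*N:ℕ):ℝ) * (h/2) = p + N*h := by push_cast; ring
  have t2 := trap_sum hc hp (half_pos hh) (N := 2*N) (by rw [e0]; exact hq) hc2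
  rw [e0] at t2
  have e1 : ∑ k ∈ Finset.range (2*N), lsin (p + (k+1) * (h/2)) =
     (∑ k ∈ Finset.range N, lsin (p + (k+1/2) * h)) + ∑ k ∈ Finset.range N, lsin (p + (k+1) * h) := by
    clear t1 t2 e0 hq
    induction N with
    | zero => simp
    | succ m ih =>
      rw [show 2*(m+1) = 2*m+1+1 by ring, Finset.sum_range_succ, Finset.sum_range_succ, ih,
        Finset.sum_range_succ, Finset.sum_range_succ]
      push_cast
      rw [show p + (2*(m:ℝ)+1)*(h/2) = p + (m+1/2)*h by ring,
        show p + (2*(m:ℝ)+1+1)*(h/2) = p + (m+1)*h by ring]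
      ring
  rw [e1, show (FF (p + N*h) - FF p)/(h/2) = 2*((FF (p + N*h) - FF p)/h) by field_simp] at t2
  rw [abs_le] at *
  have : 0 ≤ π / Real.sin c ^ 2 * h := by positivity
  constructor <;> linarith [t1.1, t1.2, t2.1, t2.2]

/-- second symmetric difference -/
lemma FF_second : ∃ g : ℝ → ℝ, Tendsto g (nhds 0) (nhds (Real.sqrt 3)) ∧
    ∀ d, FF (π/6 + d) + FF (π/6 - d) - 2 * FF (π/6) = g d * d^2 := by
  have hpi := Real.pi_pos
  have hnear : ∀ᶠ d in nhds (0:ℝ), -(π/6) < d ∧ d < π/6 :=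
    Ioo_mem_nhds (by linarith) (by linarith)
  have hl := lsin_hasDerivAt (y := π/6) (by linarith) (by linarith)
  have hcot : Real.cos (π/6) / Real.sin (π/6) = Real.sqrt 3 := by
    rw [Real.cos_pi_div_six, Real.sin_pi_div_six]; field_simp
  rw [hcot] at hl
  have hplus : HasDerivAt (fun d => lsin (π/6 + d)) (Real.sqrt 3) 0 := by
    have := HasDerivAt.comp_const_add (π/6) 0 (by simpa using hl)
    exact this
  have hminus : HasDerivAt (fun d => lsin (π/6 - d)) (-Real.sqrt 3) 0 := by
    have := HasDerivAt.comp_const_sub (π/6) 0 (by simpa using hl)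
    exact this
  have hdiff := (hplus.sub hminus).tendsto_slope
  have key : Tendsto (fun d => (FF (π/6 + d) + FF (π/6 - d) - 2 * FF (π/6)) / d^2)
      (nhdsWithin 0 {0}ᶜ) (nhds (Real.sqrt 3)) := by
    have hder : ∀ᶠ d in nhds (0:ℝ), HasDerivAt (fun d => FF (π/6 + d) + FF (π/6 - d) - 2 * FF (π/6))
        (lsin (π/6 + d) + -lsin (π/6 - d)) d := by
      filter_upwards [hnear] with d hd
      have h1 := HasDerivAt.comp_const_add (π/6) d
        (FF_hasDerivAt (y := π/6 + d) (by linarith) (by linarith))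
      have h2 := HasDerivAt.comp_const_sub (π/6) d
        (FF_hasDerivAt (y := π/6 - d) (by linarith) (by linarith))
      exact (h1.add h2).sub_const _
    refine HasDerivAt.lhopital_zero_nhdsNE (f' := fun d => lsin (π/6 + d) + -lsin (π/6 - d))
      (g' := fun d => 2 * d) (hder.filter_mono nhdsWithin_le_nhds) ?_ ?_ ?_ ?_ ?_
    · refine Eventually.of_forall fun d => ?_
      simpa using hasDerivAt_pow 2 d
    · filter_upwards [self_mem_nhdsWithin] with d hd
      simpa using hd
    · have := hder.self_of_nhds.continuousAt.tendsto
      refine tendsto_nhdsWithin_of_tendsto_nhds ?_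
      convert this using 2
      simp; ring
    · refine tendsto_nhdsWithin_of_tendsto_nhds ?_
      have : ContinuousAt (fun d : ℝ => d^2) 0 := by fun_prop
      simpa using this.tendsto
    · have := hdiff.div_const 2
      rw [show (Real.sqrt 3 - -Real.sqrt 3)/2 = Real.sqrt 3 by ring] at this
      refine this.congr fun d => ?_
      simp [slope_def_field]
      ring
  classical
  refine ⟨fun d => if d = 0 then Real.sqrt 3 else
    (FF (π/6 + d) + FF (π/6 - d) - 2 * FF (π/6)) / d^2, ?_, ?_⟩
  · have : (fun d => if d = 0 then Real.sqrt 3 else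
      (FF (π/6 + d) + FF (π/6 - d) - 2 * FF (π/6)) / d^2) =
      Function.update (fun d => (FF (π/6 + d) + FF (π/6 - d) - 2 * FF (π/6)) / d^2) 0 (Real.sqrt 3) := by
      ext d; simp [Function.update_apply]
    rw [this]
    have h := continuousAt_update_same.2 key
    have h' := h.tendsto
    simpa using h'
  · intro d
    by_cases hd : d = 0
    · simp [hd]; ring
    · simp [hd]

lemma prod_two_sin (m : ℕ) :
    ∏ k ∈ Finset.range m, (2 * Real.sin ((k+1) * π / (m+1))) = m + 1 := by
  have hpi := Real.pi_pos
  have hζ := Complex.isPrimitiveRoot_exp (m+1) (Nat.succ_ne_zero m)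
  set ζ := Complex.exp (2 * π * Complex.I / ((m+1:ℕ):ℂ)) with hz
  have h1 := X_pow_sub_C_eq_prod hζ (Nat.succ_pos m) (one_pow (M := ℂ) (m+1))
  rw [Finset.prod_range_succ'] at h1
  simp only [pow_zero, mul_one, map_one] at h1
  rw [← geom_sum_mul] at h1
  have h2 := mul_right_cancel₀ (Polynomial.X_sub_C_ne_zero (1:ℂ)) (by simpa using h1)
  have h3 := congrArg (Polynomial.eval (1:ℂ)) h2
  simp [Polynomial.eval_prod, Polynomial.eval_finsetSum] at h3
  have h4 := congrArg norm h3
  rw [norm_prod] at h4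
  have h5 : ‖(m:ℂ) + 1‖ = m + 1 := by
    rw [show (m:ℂ) + 1 = ((m+1:ℕ):ℂ) by push_cast; ring, Complex.norm_natCast]; push_cast; ring
  rw [h5] at h4
  refine Eq.trans (Finset.prod_congr rfl fun k hk => ?_) h4.symm
  rw [Finset.mem_range] at hk
  have hk' : (k:ℝ) + 1 < m + 1 := by exact_mod_cast Nat.succ_lt_succ hk
  have e : ζ ^ (k+1) = Complex.exp (Complex.I * ((2 * ((k+1) * π / (m+1)) : ℝ) : ℂ)) := by
    rw [hz, ← Complex.exp_nat_mul]
    congr 1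
    push_cast
    ring
  rw [norm_sub_rev, e, Complex.norm_exp_I_mul_ofReal_sub_one, mul_div_cancel_left₀ _ two_ne_zero]
  have : 0 < Real.sin ((k+1) * π / (m+1)) := by
    apply Real.sin_pos_of_pos_of_lt_pi (by positivity)
    rw [div_lt_iff₀ (by positivity)]
    nlinarith
  rw [Real.norm_of_nonneg (by positivity)]

lemma prod_Icc_int (f : ℤ → ℝ) (m : ℕ) :
    ∏ n ∈ Finset.Icc (1:ℤ) (m:ℤ), f n = ∏ k ∈ Finset.range m, f ((k:ℤ)+1) := by
  refine Finset.prod_bij' (fun n _ => (n-1).toNat) (fun k _ => (k:ℤ)+1) ?_ ?_ ?_ ?_ ?_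
  · intro n hn; simp at hn ⊢; omega
  · intro n hn; simp at hn ⊢; omega
  · intro n hn; simp at hn ⊢; omega
  · intro n hn; simp
  · intro n hn; simp at hn; congr 1; omega

lemma prod_sin_exp (f : ℕ → ℝ) (m : ℕ) (hf : ∀ k < m, 0 < f k ∧ f k < π) :
    ∏ k ∈ Finset.range m, Real.sin (f k) = Real.exp (∑ k ∈ Finset.range m, lsin (f k)) := by
  rw [Real.exp_sum]
  refine Finset.prod_congr rfl fun k hk => ?_
  have := hf k (Finset.mem_range.1 hk)
  rw [lsin, Real.exp_log (Real.sin_pos_of_pos_of_lt_pi this.1 this.2)]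

noncomputable def WW (h : ℝ) (m : ℕ) : ℝ := ∑ k ∈ Finset.range m, lsin ((k+1) * h)

noncomputable def MM (h p : ℝ) (m : ℕ) : ℝ := ∑ k ∈ Finset.range m, lsin (p + (k+1/2) * h)

lemma WW_add (h : ℝ) (a b : ℕ) :
    WW h (a+b) = WW h a + ∑ k ∈ Finset.range b, lsin (a * h + (k+1) * h) := by
  unfold WW
  rw [Finset.sum_range_add]
  congr 1
  refine Finset.sum_congr rfl fun k _ => ?_
  congr 1; push_cast; ring

lemma sinprod (T : ℕ) (hT : 0 < T) (m : ℕ) (hm : m ≤ 2*T) :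
    ∏ n ∈ Finset.Icc (1:ℤ) (m:ℤ), Real.sin ((n:ℝ) * π / (3 * T)) = Real.exp (WW (π/(3*T)) m) := by
  have hpi := Real.pi_pos
  have hT' : (0:ℝ) < T := by exact_mod_cast hT
  rw [prod_Icc_int (fun n => Real.sin ((n:ℝ) * π / (3 * T)))]
  have := prod_sin_exp (fun k => ((k:ℝ)+1) * (π/(3*T))) m (fun k hk => by
    refine ⟨by positivity, ?_⟩
    have : (k:ℝ) + 1 ≤ 2 * T := by exact_mod_cast (by omega : k + 1 ≤ 2 * T)
    rw [← mul_div_assoc, div_lt_iff₀ (by positivity)]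
    nlinarith)
  rw [WW, ← this]
  refine Finset.prod_congr rfl fun k _ => ?_
  push_cast
  rw [mul_div_assoc]

lemma cosprod (T a b : ℕ) (hT : 0 < T) (hab : a + b = T) :
    ∏ n ∈ Finset.Icc (1:ℤ) (a:ℤ), Real.cos ((2 * (n:ℝ) + T - 1) * π / (6 * T))
      = Real.exp (MM (π/(3*T)) (b * (π/(3*T))) a) := by
  have hpi := Real.pi_pos
  have hT' : (0:ℝ) < T := by exact_mod_cast hT
  rw [prod_Icc_int (fun n => Real.cos ((2 * (n:ℝ) + T - 1) * π / (6 * T)))]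
  have := prod_sin_exp (fun k => b * (π/(3*T)) + ((k:ℝ)+1/2) * (π/(3*T))) a (fun k hk => by
    refine ⟨by positivity, ?_⟩
    have : (b:ℝ) + k + 1 ≤ T := by exact_mod_cast (by omega : b + k + 1 ≤ T)
    rw [← add_mul, ← mul_div_assoc, div_lt_iff₀ (by positivity)]
    nlinarith)
  rw [MM, ← this, ← Finset.prod_range_reflect]
  refine Finset.prod_congr rfl fun k hk => ?_
  rw [Finset.mem_range] at hk
  rw [← Real.sin_pi_div_two_sub]
  congr 1
  have e : ((a - 1 - k : ℕ):ℝ) = T - b - 1 - k := by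
    rw [← hab, Nat.cast_sub (by omega), Nat.cast_sub (by omega)]; push_cast; ring
  push_cast
  rw [e]
  field_simp
  ring

lemma Dprod (T : ℕ) (hT : 0 < T) :
    ∏ n ∈ Finset.Icc (1:ℤ) (T:ℤ), Real.cos ((2 * (n:ℝ) - T - 1) * π / (6 * T))
      = Real.exp (MM (π/(3*T)) (T * (π/(3*T))) T) := by
  have hpi := Real.pi_pos
  have hT' : (0:ℝ) < T := by exact_mod_cast hT
  rw [prod_Icc_int (fun n => Real.cos ((2 * (n:ℝ) - T - 1) * π / (6 * T)))]
  have := prod_sin_exp (fun k => T * (π/(3*T)) + ((k:ℝ)+1/2) * (π/(3*T))) T (fun k hk => by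
    refine ⟨by positivity, ?_⟩
    have : (k:ℝ) + 1 ≤ T := by exact_mod_cast (by omega : k + 1 ≤ T)
    rw [← add_mul, ← mul_div_assoc, div_lt_iff₀ (by positivity)]
    nlinarith)
  rw [MM, ← this]
  refine Finset.prod_congr rfl fun k hk => ?_
  rw [← Real.cos_neg, ← Real.sin_pi_div_two_sub]
  congr 1
  push_cast
  field_simp
  ring

lemma Ptilde_exp (T a b : ℕ) (hT : 0 < T) (hab : a + b = T) :
    Ptilde T T ((a:ℤ) - b) = Real.exp (4 * WW (π/(3*T)) T - WW (π/(3*T)) (2*T)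
      - MM (π/(3*T)) (T * (π/(3*T))) T
      + MM (π/(3*T)) (b * (π/(3*T))) a + MM (π/(3*T)) (a * (π/(3*T))) b
      - 2 * WW (π/(3*T)) a - 2 * WW (π/(3*T)) b) := by
  have hmem : ((T:ℤ), (a:ℤ) - b) ∈ LambdaSet T := by
    refine ⟨⟨a, ?_⟩, Or.inl ⟨?_, ?_, ?_, ?_⟩⟩ <;> simp only [] <;> omega
  rw [Ptilde, if_pos hmem, ctilde2]
  have e1 : ((T:ℤ) + (a - b)) / 2 = (a:ℤ) := by omega
  have e2 : ((T:ℤ) - (a - b)) / 2 = (b:ℤ) := by omega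
  have e3 : (2 * (T:ℤ) - T - (a - b)) / 2 = (b:ℤ) := by omega
  have e4 : (2 * (T:ℤ) - T + (a - b)) / 2 = (a:ℤ) := by omega
  have e5 : 2 * (T:ℤ) - T = (T:ℤ) := by omega
  have e6 : 2 * (T:ℤ) = ((2*T:ℕ):ℤ) := by push_cast; ring
  rw [e1, e2, e3, e4, e5, e6]
  have c1 : ∀ n : ℤ, (2 * (n:ℝ) + 3 * (T:ℝ) - 2 * ((T:ℤ):ℝ) - 1) = 2 * (n:ℝ) + T - 1 := by
    intro n; push_cast; ring
  have c2 : ∀ n : ℤ, (2 * (n:ℝ) + 2 * ((T:ℤ):ℝ) - (T:ℝ) - 1) = 2 * (n:ℝ) + T - 1 := by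
    intro n; push_cast; ring
  simp only [c1, c2, Finset.prod_div_distrib, Finset.prod_const_one, Finset.prod_pow]
  rw [sinprod T hT T (by omega), sinprod T hT (2*T) (by omega), sinprod T hT a (by omega),
    sinprod T hT b (by omega), Dprod T hT, cosprod T a b hT hab, cosprod T b a hT (by omega)]
  simp only [← Real.exp_nat_mul, ← Real.exp_add, ← Real.exp_sub, one_div, ← Real.exp_neg]
  congr 1
  push_cast
  ring

lemma WW_exact (T : ℕ) (hT : 0 < T) :
    WW (π/(3*T)) (2*T) + WW (π/(3*T)) T = Real.log (3*T) - (3*T-1) * Real.log 2 + lsin (π/3) := by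
  have hpi := Real.pi_pos
  have hT' : (0:ℝ) < T := by exact_mod_cast hT
  obtain ⟨t, rfl⟩ : ∃ t, T = t + 1 := ⟨T-1, by omega⟩
  have h1 := prod_two_sin (2*(t+1) + t)
  have hm : ((2*(t+1)+t : ℕ):ℝ) + 1 = 3 * ((t+1:ℕ):ℝ) := by push_cast; ring
  rw [Finset.prod_mul_distrib, hm] at h1
  set h := π / (3 * ((t+1:ℕ):ℝ)) with hh
  have h2 := prod_sin_exp (fun k => ((k:ℝ)+1) * π / (3 * ((t+1:ℕ):ℝ))) (2*(t+1)+t) (fun k hk => by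
    refine ⟨by positivity, ?_⟩
    have : (k:ℝ) + 1 < 3 * ((t+1:ℕ):ℝ) := by rw [← hm]; exact_mod_cast Nat.succ_lt_succ hk
    rw [div_lt_iff₀ (by positivity)]
    nlinarith)
  rw [h2] at h1
  have h3 := congrArg Real.log h1
  rw [Real.log_mul (by simp) (by positivity), Real.log_exp, Finset.prod_const, Finset.card_range,
    Real.log_pow] at h3
  have h4 : ∑ k ∈ Finset.range (2*(t+1)+t), lsin (((k:ℝ)+1) * π / (3 * ((t+1:ℕ):ℝ))) =
      WW h (2*(t+1)+t) := by
    refine Finset.sum_congr rfl fun k _ => ?_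
    rw [mul_div_assoc]
  have h5 : WW h (2*(t+1)+t) = WW h (2*(t+1)) + WW h t := by
    rw [WW_add]
    congr 1
    rw [WW, ← Finset.sum_range_reflect]
    refine Finset.sum_congr rfl fun k hk => ?_
    rw [Finset.mem_range] at hk
    have e : ((t - 1 - k : ℕ):ℝ) = t - 1 - k := by
      rw [Nat.cast_sub (by omega), Nat.cast_sub (by omega)]; push_cast; ring
    rw [e, lsin, lsin, ← Real.sin_pi_sub]
    congr 2
    rw [hh]; push_cast
    field_simp
    ring
  have h6 : WW h (t+1) = WW h t + lsin (π/3) := by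
    rw [WW, Finset.sum_range_succ, ← WW]
    congr 2
    rw [hh]; push_cast; field_simp
  rw [h4, h5] at h3
  rw [h6]
  push_cast at h3 ⊢
  linarith

noncomputable def EE (T a b : ℕ) : ℝ := 4 * WW (π/(3*T)) T - WW (π/(3*T)) (2*T)
      - MM (π/(3*T)) (T * (π/(3*T))) T
      + MM (π/(3*T)) (b * (π/(3*T))) a + MM (π/(3*T)) (a * (π/(3*T))) b
      - 2 * WW (π/(3*T)) a - 2 * WW (π/(3*T)) b

lemma log_asymp (T a b : ℕ) (hT : 0 < T) (hab : a + b = T) (ha : T ≤ 4 * a) (hb : T ≤ 4 * b) :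
    |EE T a b - (-3 * (FF (a * (π/(3*T))) + FF (b * (π/(3*T))) - 2 * FF (π/6)) / (π/(3*T))
      + 3/2 * lsin (π/3) - lsin (a * (π/(3*T))) - lsin (b * (π/(3*T)))
      - Real.log (3*T) / 2 - Real.log 2 / 2)| ≤ 11 * (π / Real.sin (π/12) ^ 2) * (π/(3*T)) := by
  have hpi := Real.pi_pos
  have hT' : (0:ℝ) < T := by exact_mod_cast hT
  have hc : (0:ℝ) < π/12 := by positivity
  have hc2 : π/12 ≤ π/2 := by linarith
  have hTh : (T:ℝ) * (π/(3*T)) = π/3 := by field_simp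
  have hex := WW_exact T hT
  have hlog : (3 * (T:ℝ)) * (π/(3*T)) = π := by field_simp
  unfold EE
  set h := π/(3*(T:ℝ)) with hh
  have hh0 : 0 < h := by positivity
  have haR : (T:ℝ) ≤ 4 * a := by exact_mod_cast ha
  have hbR : (T:ℝ) ≤ 4 * b := by exact_mod_cast hb
  have habR : (a:ℝ) + b = T := by exact_mod_cast hab
  have hpa : π/12 ≤ a * h := by nlinarith
  have hpb : π/12 ≤ b * h := by nlinarith
  have hsum1 : (a:ℝ) * h + b * h = π/3 := by rw [← add_mul, habR, hTh]
  have hsum2 : (b:ℝ) * h + a * h = π/3 := by linarith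
  have hsum3 : π/3 + T * h = 2*π/3 := by rw [hTh]; ring
  have t1 := trap_sum hc hpa hh0 (N := b) (by linarith) hc2
  have t2 := trap_sum hc hpb hh0 (N := a) (by linarith) hc2
  have t3 := trap_sum hc (p := π/3) (by linarith) hh0 (N := T) (by linarith) hc2
  have m1 := mid_sum hc hpa hh0 (N := b) (by linarith) hc2
  have m2 := mid_sum hc hpb hh0 (N := a) (by linarith) hc2
  have m3 := mid_sum hc (p := π/3) (by linarith) hh0 (N := T) (by linarith) hc2
  rw [← MM, hsum1] at m1
  rw [← MM, hsum2] at m2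
  rw [← MM, hsum3] at m3
  rw [hsum1] at t1
  rw [hsum2] at t2
  rw [hsum3] at t3
  have w1 := WW_add h a b
  have w2 := WW_add h b a
  have w3 := WW_add h T T
  rw [hab] at w1
  rw [add_comm b a, hab] at w2
  rw [← two_mul, hTh] at w3
  rw [hTh]
  have hl : lsin (2*π/3) = lsin (π/3) := by
    rw [lsin, lsin, ← Real.sin_pi_sub]; congr 2; ring
  rw [hl] at t3
  set K := π / Real.sin (π/12) ^ 2
  have hK : 0 ≤ K * h := by positivity
  -- the exponent identity
  have hF : (FF (π/3) - FF (a*h))/h * 3 + (FF (π/3) - FF (b*h))/h * 3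
      - 3/2 * ((FF (2*π/3) - FF (π/3))/h) + (3*T)/2 * Real.log 2
      = -3 * (FF (a*h) + FF (b*h) - 2 * FF (π/6)) / h := by
    have r := FF_refl
    have d := FF_dup
    have e : (3*(T:ℝ)) = π/h := by rw [eq_div_iff hh0.ne', hlog]
    rw [e, r]
    field_simp
    linear_combination (-6) * d
  rw [← hF]
  rw [abs_le] at *
  constructor <;> linarith [t1.1, t1.2, t2.1, t2.2, t3.1, t3.2, m1.1, m1.2, m2.1, m2.2, m3.1, m3.2]

theorem simplified_trig_CLT (ξ : ℝ)
    (T : ℕ → ℕ) (hTpos : ∀ j, 0 < T j)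
    (hT : Tendsto (fun j => (T j : ℝ)) atTop atTop)
    (x : ℕ → ℤ) (hpar : ∀ j, Even ((T j : ℤ) + x j))
    (hx : Tendsto (fun j => (x j : ℝ) / Real.sqrt (T j : ℝ)) atTop (nhds ξ)) :
    Tendsto (fun j => Real.sqrt (T j : ℝ) / 2 * Ptilde (T j) (T j : ℤ) (x j))
      atTop (nhds ((3 : ℝ) ^ ((1 : ℝ) / 4) / 2 * Real.exp (-(Real.sqrt 3 * π / 4) * ξ ^ 2))) := by
  have hpi := Real.pi_pos
  have hT0 : ∀ j, (0:ℝ) < T j := fun j => by exact_mod_cast hTpos j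
  -- x / T tends to zero
  have hsq : Tendsto (fun j => (Real.sqrt (T j))⁻¹) atTop (nhds 0) :=
    tendsto_inv_atTop_zero.comp (Real.tendsto_sqrt_atTop.comp hT)
  have hxT : Tendsto (fun j => (x j : ℝ) / T j) atTop (nhds 0) := by
    have := hx.mul hsq
    rw [mul_zero] at this
    refine this.congr fun j => ?_
    rw [← div_eq_mul_inv, div_div, Real.mul_self_sqrt (hT0 j).le]
  have hsmall : ∀ᶠ j in atTop, |(x j : ℝ) / T j| < 1/2 := by
    have := hxT.abs
    rw [abs_zero] at this
    exact this.eventually_lt_const (by norm_num)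
  set a : ℕ → ℕ := fun j => (((T j : ℤ) + x j)/2).toNat with ha_def
  set b : ℕ → ℕ := fun j => (((T j : ℤ) - x j)/2).toNat with hb_def
  have hab : ∀ᶠ j in atTop, a j + b j = T j ∧ (a j : ℤ) - b j = x j ∧ T j ≤ 4 * a j ∧ T j ≤ 4 * b j := by
    filter_upwards [hsmall] with j hj
    rw [abs_div, abs_of_pos (hT0 j), div_lt_iff₀ (hT0 j), abs_lt] at hj
    obtain ⟨c, hc⟩ := hpar j
    have h1 : -(T j : ℤ) < 2 * x j := by
      have : -(T j : ℝ) < 2 * x j := by linarith [hj.1]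
      exact_mod_cast this
    have h2 : 2 * x j < (T j : ℤ) := by
      have : 2 * (x j : ℝ) < T j := by linarith [hj.2]
      exact_mod_cast this
    simp only [ha_def, hb_def]
    omega
  obtain ⟨g, hg, hgF⟩ := FF_second
  set h : ℕ → ℝ := fun j => π / (3 * T j) with hh_def
  have hh : Tendsto h atTop (nhds 0) :=
    tendsto_const_nhds.div_atTop (hT.const_mul_atTop (by norm_num))
  set d : ℕ → ℝ := fun j => π / 6 * (x j / T j) with hd_def
  have hd : Tendsto d atTop (nhds 0) := by
    have := hxT.const_mul (π/6)
    simpa using this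
  have hs3 : Real.sqrt 3 > 0 := by positivity
  have hl6 : ContinuousAt lsin (π/6) := (lsin_hasDerivAt (by linarith) (by linarith)).continuousAt
  have hlp : Tendsto (fun j => lsin (π/6 + d j)) atTop (nhds (lsin (π/6))) := by
    refine hl6.tendsto.comp ?_
    simpa using hd.const_add (π/6)
  have hlm : Tendsto (fun j => lsin (π/6 - d j)) atTop (nhds (lsin (π/6))) := by
    refine hl6.tendsto.comp ?_
    simpa using hd.const_sub (π/6)
  -- main approximation
  have happ : Tendsto (fun j => -(π/4) * g (d j) * ((x j : ℝ) / Real.sqrt (T j)) ^ 2 + 3/2 * lsin (π/3)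
      - lsin (π/6 + d j) - lsin (π/6 - d j) - Real.log 3 / 2 - Real.log 2 / 2 - Real.log 2) atTop
      (nhds (-(π/4) * Real.sqrt 3 * ξ^2 + 3/2 * lsin (π/3) - lsin (π/6) - lsin (π/6)
        - Real.log 3 / 2 - Real.log 2 / 2 - Real.log 2)) := by
    exact (((((((hg.comp hd).const_mul _).mul (hx.pow 2)).add_const _).sub hlp).sub hlm).sub_const _
      |>.sub_const _).sub_const _
  have herr : Tendsto (fun j => (EE (T j) (a j) (b j) + Real.log (T j) / 2 - Real.log 2)
      - (-(π/4) * g (d j) * ((x j : ℝ) / Real.sqrt (T j)) ^ 2 + 3/2 * lsin (π/3)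
      - lsin (π/6 + d j) - lsin (π/6 - d j) - Real.log 3 / 2 - Real.log 2 / 2 - Real.log 2)) atTop
      (nhds 0) := by
    refine squeeze_zero_norm' (a := fun j => 11 * (π / Real.sin (π/12) ^ 2) * h j) ?_ ?_
    · filter_upwards [hab] with j hj
      obtain ⟨h1, h2, h3, h4⟩ := hj
      have key := log_asymp (T j) (a j) (b j) (hTpos j) h1 h3 h4
      have h1R : (a j : ℝ) + b j = T j := by exact_mod_cast h1
      have h2R : (a j : ℝ) - b j = x j := by exact_mod_cast h2
      have hTj := hT0 j
      have ea : (a j : ℝ) * (π/(3 * T j)) = π/6 + d j := by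
        simp only [hd_def]; field_simp; linarith
      have eb : (b j : ℝ) * (π/(3 * T j)) = π/6 - d j := by
        simp only [hd_def]; field_simp; linarith
      rw [ea, eb, hgF, Real.log_mul (by norm_num) hTj.ne'] at key
      have e1 : -3 * (g (d j) * d j ^ 2) / (π/(3 * T j)) =
          -(π/4) * g (d j) * ((x j : ℝ) / Real.sqrt (T j)) ^ 2 := by
        rw [div_pow, Real.sq_sqrt hTj.le]
        simp only [hd_def]
        field_simp
        ring
      rw [e1] at key
      rw [Real.norm_eq_abs]
      refine le_trans (le_of_eq ?_) key
      congr 1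
      ring
    · simpa using hh.const_mul (11 * (π / Real.sin (π/12) ^ 2))
  have hlim := herr.add happ
  simp only [sub_add_cancel, zero_add] at hlim
  have hexp := (Real.continuous_exp.tendsto _).comp hlim
  have hval : Real.exp (-(π/4) * Real.sqrt 3 * ξ^2 + 3/2 * lsin (π/3) - lsin (π/6) - lsin (π/6)
        - Real.log 3 / 2 - Real.log 2 / 2 - Real.log 2) =
      (3 : ℝ) ^ ((1 : ℝ) / 4) / 2 * Real.exp (-(Real.sqrt 3 * π / 4) * ξ ^ 2) := by
    have l3 : lsin (π/3) = Real.log 3 / 2 - Real.log 2 := by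
      rw [lsin, Real.sin_pi_div_three, Real.log_div hs3.ne' (by norm_num), Real.log_sqrt (by norm_num)]
    have l6 : lsin (π/6) = - Real.log 2 := by
      rw [lsin, Real.sin_pi_div_six, one_div, Real.log_inv]
    rw [l3, l6, Real.rpow_def_of_pos (by norm_num)]
    have e2 : (2:ℝ) = Real.exp (Real.log 2) := by rw [Real.exp_log (by norm_num)]
    have : Real.exp (Real.log 3 * (1/4)) / 2 = Real.exp (Real.log 3 * (1/4) - Real.log 2) := by
      rw [Real.exp_sub, ← e2]
    rw [this, ← Real.exp_add]
    congr 1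
    ring
  rw [hval] at hexp
  refine hexp.congr' ?_
  filter_upwards [hab] with j hj
  obtain ⟨h1, h2, h3, h4⟩ := hj
  have hP := Ptilde_exp (T j) (a j) (b j) (hTpos j) h1
  rw [← EE, h2] at hP
  rw [hP]
  simp only [Function.comp]
  rw [Real.exp_sub, Real.exp_add, Real.exp_log (by norm_num : (0:ℝ) < 2), ← Real.log_sqrt (hT0 j).le,
    Real.exp_log (Real.sqrt_pos.2 (hT0 j))]
  ring
end
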